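/- In the linear conjugate-Gaussian setting, the expected information gain — the expectation over data y of the KL divergence from the prior N(μ_pr, Σ_pr) to the posterior N(μ_pos(y), Σ_pos) — equals ½ log det(Gᵀ Σ_ε⁻¹ G Σ_pr + I_d). -/

import Mathlib

open Matrix Real MeasureTheory

/-- The density of the multivariate Gaussian N(μ, S) on ℝⁿ. -/
noncomputable def gaussPdf {n : ℕ} (μ : Fin n → ℝ) (S : Matrix (Fin n) (Fin n) ℝ)
    (x : Fin n → ℝ) : ℝ :=
  (Real.sqrt ((2 * Real.pi) ^ n * S.det))⁻¹ *
    Real.exp (-(1/2) * ((x - μ) ⬝ᵥ (S⁻¹ *ᵥ (x - μ))))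

/-! A Gaussian density pushes forward to a Gaussian density under invertible affine maps, so the
first two moments of `N(μ, S)` are those of Mathlib's `multivariateGaussian`, and the divergence
between two Gaussians depends on their means only through a quadratic form in the mean shift. Here
the shift is `μ_pos(y) - μ_pr = K (y - G μ_pr)` with `K` the Kalman gain, and `K M Kᵀ = Σ_pr -
Σ_pos` for the marginal covariance `M` of `y`. Its average `tr (Σ_pr⁻¹ (Σ_pr - Σ_pos))` therefore
cancels the term `tr (Σ_pr⁻¹ Σ_pos) - d` of the divergence and leaves `½ (log det Σ_pr - log det
Σ_pos)`. -/

open ProbabilityTheory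
open scoped MatrixOrder

section QuadraticForms

variable {ι κ Ω : Type*} [Fintype ι] [Fintype κ] {mΩ : MeasurableSpace Ω} {P : Measure Ω}
  {X : Ω → ι → ℝ} {Y : Ω → κ → ℝ}

lemma dotProduct_mulVec_eq_sum {R : Type*} [CommSemiring R] (x : ι → R) (A : Matrix ι κ R)
    (y : κ → R) : x ⬝ᵥ A *ᵥ y = ∑ i, ∑ j, A i j * (x i * y j) := by
  simp only [dotProduct, mulVec, Finset.mul_sum]
  exact Finset.sum_congr rfl fun i _ => Finset.sum_congr rfl fun j _ => by ring

lemma mulVec_dotProduct_mulVec_mulVec {R : Type*} [CommSemiring R] (K : Matrix ι κ R)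
    (A : Matrix ι ι R) (x : κ → R) :
    (K *ᵥ x) ⬝ᵥ A *ᵥ (K *ᵥ x) = x ⬝ᵥ (Kᵀ * A * K) *ᵥ x := by
  rw [← mulVec_mulVec, ← mulVec_mulVec, dotProduct_mulVec x, vecMul_transpose]

lemma integrable_dotProduct_mulVec (hX : ∀ i, MemLp (fun ω => X ω i) 2 P)
    (hY : ∀ j, MemLp (fun ω => Y ω j) 2 P) (A : Matrix ι κ ℝ) :
    Integrable (fun ω => X ω ⬝ᵥ A *ᵥ Y ω) P := by
  simp only [dotProduct_mulVec_eq_sum]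
  exact integrable_finsetSum _ fun i _ => integrable_finsetSum _ fun j _ =>
    ((hX i).integrable_mul (hY j)).const_mul (A i j)

lemma integral_dotProduct_mulVec [IsProbabilityMeasure P]
    (hX : ∀ i, MemLp (fun ω => X ω i) 2 P) (hY : ∀ j, MemLp (fun ω => Y ω j) 2 P)
    (A : Matrix ι κ ℝ) :
    ∫ ω, X ω ⬝ᵥ A *ᵥ Y ω ∂P =
      (fun i => ∫ ω, X ω i ∂P) ⬝ᵥ A *ᵥ (fun j => ∫ ω, Y ω j ∂P) +
        ∑ i, ∑ j, A i j * cov[fun ω => X ω i, fun ω => Y ω j; P] := by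
  have hXY (i j) : Integrable (fun ω => A i j * (X ω i * Y ω j)) P :=
    ((hX i).integrable_mul (hY j)).const_mul (A i j)
  have hcov (i j) : ∫ ω, X ω i * Y ω j ∂P =
      (∫ ω, X ω i ∂P) * (∫ ω, Y ω j ∂P) + cov[fun ω => X ω i, fun ω => Y ω j; P] := by
    rw [covariance_eq_sub (hX i) (hY j)]
    simp
  simp only [dotProduct_mulVec_eq_sum]
  rw [integral_finsetSum _ fun i _ => integrable_finsetSum _ fun j _ => hXY i j]
  simp_rw [integral_finsetSum _ fun j _ => hXY _ j, integral_const_mul, hcov, mul_add,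
    Finset.sum_add_distrib]

end QuadraticForms

section WithDensity

lemma map_withDensity_comp {α β : Type*} {mα : MeasurableSpace α} {mβ : MeasurableSpace β}
    {μ : Measure α} {g : α → β} {f : β → ENNReal} (hg : Measurable g) (hf : Measurable f) :
    (μ.withDensity (f ∘ g)).map g = (μ.map g).withDensity f := by
  ext s hs
  rw [Measure.map_apply hg hs, withDensity_apply _ (hg hs), withDensity_apply _ hs,
    setLIntegral_map hs hf hg]
  rfl

lemma pi_withDensity_ofReal {ι : Type*} [Fintype ι] {E : ι → Type*}
    {mE : ∀ i, MeasurableSpace (E i)} {μ : ∀ i, Measure (E i)} [∀ i, SigmaFinite (μ i)]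
    {f : ∀ i, E i → ℝ} (hf : ∀ i, Integrable (f i) (μ i)) (hf₀ : ∀ i x, 0 ≤ f i x) :
    Measure.pi (fun i => (μ i).withDensity fun x => ENNReal.ofReal (f i x)) =
      (Measure.pi μ).withDensity fun x => ENNReal.ofReal (∏ i, f i (x i)) := by
  have (i : ι) : IsFiniteMeasure ((μ i).withDensity fun x => ENNReal.ofReal (f i x)) :=
    isFiniteMeasure_withDensity_ofReal (hf i).2
  refine Measure.pi_eq fun s hs => ?_
  rw [withDensity_apply _ (.univ_pi hs), Measure.restrict_pi_pi,
    ← ofReal_integral_eq_lintegral_ofReal (.fintype_prod_dep fun i => (hf i).restrict)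
      (.of_forall fun x => Finset.prod_nonneg fun i _ => hf₀ i (x i)),
    integral_fintype_prod_eq_prod, ENNReal.ofReal_prod_of_nonneg
      fun i _ => integral_nonneg (hf₀ i)]
  refine Finset.prod_congr rfl fun i _ => ?_
  rw [withDensity_apply _ (hs i),
    ofReal_integral_eq_lintegral_ofReal (hf i).restrict (.of_forall (hf₀ i))]

end WithDensity

section GaussianDensity

variable {n : ℕ} {μ : Fin n → ℝ} {S : Matrix (Fin n) (Fin n) ℝ}

lemma gaussPdf_nonneg (μ : Fin n → ℝ) (S : Matrix (Fin n) (Fin n) ℝ) (x : Fin n → ℝ) :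
    0 ≤ gaussPdf μ S x := by
  unfold gaussPdf
  positivity

lemma gaussPdf_pos (μ : Fin n → ℝ) (hS : 0 < S.det) (x : Fin n → ℝ) :
    0 < gaussPdf μ S x := by
  unfold gaussPdf
  positivity

@[fun_prop]
lemma measurable_gaussPdf (μ : Fin n → ℝ) (S : Matrix (Fin n) (Fin n) ℝ) :
    Measurable (gaussPdf μ S) := by
  unfold gaussPdf
  exact Continuous.measurable (by fun_prop)

lemma log_gaussPdf (μ : Fin n → ℝ) (hS : 0 < S.det) (x : Fin n → ℝ) :
    log (gaussPdf μ S x) =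
      -(1/2) * (log ((2 * π) ^ n) + log S.det + (x - μ) ⬝ᵥ S⁻¹ *ᵥ (x - μ)) := by
  have hπ : 0 < (2 * π) ^ n := by positivity
  rw [gaussPdf, log_mul (by positivity) (by positivity), log_exp, log_inv,
    log_sqrt (by positivity), log_mul hπ.ne' hS.ne']
  ring

lemma gaussPdf_add_mulVec {L : Matrix (Fin n) (Fin n) ℝ} (hL : L.det ≠ 0) (b μ x : Fin n → ℝ)
    (S : Matrix (Fin n) (Fin n) ℝ) :
    |L.det| * gaussPdf (b + L *ᵥ μ) (L * S * Lᵀ) (b + L *ᵥ x) = gaussPdf μ S x := by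
  have hdet : √((2 * π) ^ n * (L * S * Lᵀ).det) = |L.det| * √((2 * π) ^ n * S.det) := by
    rw [det_mul, det_mul, det_transpose, ← sqrt_sq_eq_abs, ← sqrt_mul (sq_nonneg _)]
    ring_nf
  have hinv : Lᵀ * (L * S * Lᵀ)⁻¹ * L = S⁻¹ := by
    rw [Matrix.mul_inv_rev, Matrix.mul_inv_rev,
      mul_nonsing_inv_cancel_left _ _ (by simpa using hL),
      nonsing_inv_mul_cancel_right _ _ (by simpa using hL)]
  have hsub : b + L *ᵥ x - (b + L *ᵥ μ) = L *ᵥ (x - μ) := by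
    rw [mulVec_sub, add_sub_add_left_eq_sub]
  rw [gaussPdf, gaussPdf, hdet, hsub, mulVec_dotProduct_mulVec_mulVec, hinv, mul_inv,
    ← mul_assoc, mul_inv_cancel_left₀ (abs_ne_zero.2 hL)]

lemma gaussPdf_zero_one (x : Fin n → ℝ) :
    gaussPdf 0 1 x = ∏ i, gaussianPDFReal 0 1 (x i) := by
  have hsqrt : √((2 * π) ^ n) = √(2 * π) ^ n := by
    rw [sqrt_eq_rpow, sqrt_eq_rpow, rpow_pow_comm (by positivity)]
  have hexp : -(1 / 2) * (x ⬝ᵥ x) = ∑ i, -(x i) ^ 2 / 2 := by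
    rw [dotProduct, Finset.mul_sum]
    exact Finset.sum_congr rfl fun i _ => by ring
  rw [gaussPdf, sub_zero, inv_one, one_mulVec, det_one, mul_one, hsqrt, hexp, exp_sum]
  simp only [gaussianPDFReal, NNReal.coe_one, mul_one, sub_zero, Finset.prod_mul_distrib,
    Finset.prod_const, Finset.card_univ, Fintype.card_fin, inv_pow]

/-- The law `N(μ, S)` on `Fin n → ℝ`, given by its density so that it can be compared with
integrals against `gaussPdf`; it is the Gaussian measure only when `S` is positive definite. -/
noncomputable def gaussMeasure (μ : Fin n → ℝ) (S : Matrix (Fin n) (Fin n) ℝ) :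
    Measure (Fin n → ℝ) :=
  volume.withDensity fun x => ENNReal.ofReal (gaussPdf μ S x)

lemma integral_gaussMeasure (μ : Fin n → ℝ) (S : Matrix (Fin n) (Fin n) ℝ)
    (f : (Fin n → ℝ) → ℝ) :
    ∫ x, f x ∂gaussMeasure μ S = ∫ x, f x * gaussPdf μ S x := by
  rw [gaussMeasure, integral_withDensity_eq_integral_toReal_smul (by fun_prop) (by simp)]
  simp [gaussPdf_nonneg, mul_comm]

lemma gaussMeasure_zero_one :
    gaussMeasure (0 : Fin n → ℝ) 1 = Measure.pi fun _ => gaussianReal 0 1 := by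
  simp only [gaussianReal_of_var_ne_zero _ one_ne_zero, gaussianPDF_def]
  rw [pi_withDensity_ofReal (fun _ => integrable_gaussianPDFReal 0 1)
    fun _ => gaussianPDFReal_nonneg 0 1]
  simp only [gaussMeasure, gaussPdf_zero_one, volume_pi]

lemma map_gaussMeasure_add_mulVec {L : Matrix (Fin n) (Fin n) ℝ} (hL : L.det ≠ 0)
    (b μ : Fin n → ℝ) (S : Matrix (Fin n) (Fin n) ℝ) :
    (gaussMeasure μ S).map (fun x => b + L *ᵥ x) =
      gaussMeasure (b + L *ᵥ μ) (L * S * Lᵀ) := by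
  have hvol : volume.map (fun x => b + L *ᵥ x) = ENNReal.ofReal |L.det⁻¹| • volume := by
    change volume.map ((b + ·) ∘ toLin' L) = _
    rw [← Measure.map_map (by fun_prop) (toLin' L).continuous_of_finiteDimensional.measurable,
      map_matrix_volume_pi_eq_smul_volume_pi hL, Measure.map_smul, map_add_left_eq_self]
  have hdens : (fun x => ENNReal.ofReal (gaussPdf μ S x)) =
      (ENNReal.ofReal |L.det| • fun x => ENNReal.ofReal (gaussPdf (b + L *ᵥ μ) (L * S * Lᵀ) x)) ∘
        fun x => b + L *ᵥ x := by
    ext x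
    simp [← gaussPdf_add_mulVec hL b μ x S, ENNReal.ofReal_mul]
  have hcancel : ENNReal.ofReal |L.det⁻¹| * ENNReal.ofReal |L.det| = 1 := by
    rw [← ENNReal.ofReal_mul (abs_nonneg _), ← abs_mul, inv_mul_cancel₀ hL, abs_one,
      ENNReal.ofReal_one]
  rw [gaussMeasure, hdens, map_withDensity_comp (by fun_prop) (by fun_prop), hvol,
    withDensity_smul_measure, withDensity_smul _ (by fun_prop), smul_smul, hcancel, one_smul,
    gaussMeasure]

lemma gaussMeasure_eq_map_multivariateGaussian (μ : Fin n → ℝ) (hS : S.PosDef) :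
    gaussMeasure μ S = (multivariateGaussian (WithLp.toLp 2 μ) S).map WithLp.ofLp := by
  set L := CFC.sqrt S
  have hLT : Lᵀ = L := (CFC.sqrt_nonneg S).isSelfAdjoint
  have hLL : L * L = S := CFC.sqrt_mul_sqrt_self S hS.posSemidef.nonneg
  have hL : L.det ≠ 0 := fun h => hS.det_pos.ne' (by rw [← hLL, det_mul, h, mul_zero])
  have h := map_gaussMeasure_add_mulVec hL μ 0 1
  rw [mulVec_zero, add_zero, mul_one, hLT, hLL, gaussMeasure_zero_one] at h
  rw [← h, multivariateGaussian, ← map_pi_eq_stdGaussian,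
    Measure.map_map (by fun_prop) (by fun_prop), Measure.map_map (by fun_prop) (by fun_prop)]
  rfl

lemma isProbabilityMeasure_gaussMeasure (μ : Fin n → ℝ) (hS : S.PosDef) :
    IsProbabilityMeasure (gaussMeasure μ S) := by
  rw [gaussMeasure_eq_map_multivariateGaussian μ hS]
  exact Measure.isProbabilityMeasure_map (by fun_prop)

lemma memLp_two_eval_gaussMeasure (μ : Fin n → ℝ) (hS : S.PosDef) (i : Fin n) :
    MemLp (fun x => x i) 2 (gaussMeasure μ S) := by
  rw [gaussMeasure_eq_map_multivariateGaussian μ hS,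
    memLp_map_measure_iff (continuous_apply i).aestronglyMeasurable (by fun_prop)]
  exact IsGaussian.memLp_two_id.eval_piLp i

lemma integral_eval_gaussMeasure (μ : Fin n → ℝ) (hS : S.PosDef) (i : Fin n) :
    ∫ x, x i ∂gaussMeasure μ S = μ i := by
  rw [gaussMeasure_eq_map_multivariateGaussian μ hS,
    integral_map (by fun_prop) (continuous_apply i).aestronglyMeasurable,
    ← eval_integral_piLp fun i => IsGaussian.integrable_id.eval_piLp i]
  simp

lemma covariance_eval_gaussMeasure (μ : Fin n → ℝ) (hS : S.PosDef) (i j : Fin n) :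
    cov[fun x => x i, fun x => x j; gaussMeasure μ S] = S i j := by
  rw [gaussMeasure_eq_map_multivariateGaussian μ hS,
    covariance_map (continuous_apply i).aestronglyMeasurable
      (continuous_apply j).aestronglyMeasurable (by fun_prop)]
  exact covariance_eval_multivariateGaussian hS.posSemidef i j

lemma memLp_two_sub_eval_gaussMeasure (μ a : Fin n → ℝ) (hS : S.PosDef) (i : Fin n) :
    MemLp (fun x => (x - a) i) 2 (gaussMeasure μ S) := by
  have := isProbabilityMeasure_gaussMeasure μ hS
  exact (memLp_two_eval_gaussMeasure μ hS i).sub (memLp_const (a i))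

lemma integrable_quadForm_gaussMeasure (μ a : Fin n → ℝ) (hS : S.PosDef)
    (A : Matrix (Fin n) (Fin n) ℝ) :
    Integrable (fun x => (x - a) ⬝ᵥ A *ᵥ (x - a)) (gaussMeasure μ S) :=
  integrable_dotProduct_mulVec (memLp_two_sub_eval_gaussMeasure μ a hS)
    (memLp_two_sub_eval_gaussMeasure μ a hS) A

lemma integral_quadForm_gaussMeasure (μ a : Fin n → ℝ) (hS : S.PosDef)
    (A : Matrix (Fin n) (Fin n) ℝ) :
    ∫ x, (x - a) ⬝ᵥ A *ᵥ (x - a) ∂gaussMeasure μ S =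
      (μ - a) ⬝ᵥ A *ᵥ (μ - a) + (A * S).trace := by
  have := isProbabilityMeasure_gaussMeasure μ hS
  have hint (i) : Integrable (fun x : Fin n → ℝ => x i) (gaussMeasure μ S) :=
    (memLp_two_eval_gaussMeasure μ hS i).integrable one_le_two
  have hmean : (fun i => ∫ x, (x - a) i ∂gaussMeasure μ S) = μ - a := by
    ext i
    simp [integral_sub (hint i) (integrable_const _), integral_eval_gaussMeasure μ hS]
  have hcov (i j) : cov[fun x => (x - a) i, fun x => (x - a) j; gaussMeasure μ S] = S j i := by
    simp only [Pi.sub_apply]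
    rw [covariance_sub_const_left (hint i), covariance_sub_const_right (hint j), covariance_comm,
      covariance_eval_gaussMeasure μ hS]
  rw [integral_dotProduct_mulVec (memLp_two_sub_eval_gaussMeasure μ a hS)
    (memLp_two_sub_eval_gaussMeasure μ a hS), hmean]
  simp_rw [hcov, Matrix.trace, Matrix.diag_apply, Matrix.mul_apply]

lemma integral_log_gaussPdf_div_gaussPdf (μ ν : Fin n → ℝ) {T : Matrix (Fin n) (Fin n) ℝ}
    (hS : S.PosDef) (hT : T.PosDef) :
    ∫ x, log (gaussPdf μ S x / gaussPdf ν T x) ∂gaussMeasure μ S =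
      1 / 2 * (log T.det - log S.det + (T⁻¹ * S).trace - n + (μ - ν) ⬝ᵥ T⁻¹ *ᵥ (μ - ν)) := by
  have := isProbabilityMeasure_gaussMeasure μ hS
  have hlog (x) : log (gaussPdf μ S x / gaussPdf ν T x) = 1 / 2 * (log T.det - log S.det +
      ((x - ν) ⬝ᵥ T⁻¹ *ᵥ (x - ν) - (x - μ) ⬝ᵥ S⁻¹ *ᵥ (x - μ))) := by
    rw [log_div (gaussPdf_pos μ hS.det_pos x).ne' (gaussPdf_pos ν hT.det_pos x).ne',
      log_gaussPdf μ hS.det_pos, log_gaussPdf ν hT.det_pos]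
    ring
  have hT_int := integrable_quadForm_gaussMeasure μ ν hS T⁻¹
  have hS_int := integrable_quadForm_gaussMeasure μ μ hS S⁻¹
  have htrace : (S⁻¹ * S).trace = n := by
    rw [nonsing_inv_mul _ hS.det_pos.ne'.isUnit, trace_one, Fintype.card_fin]
  simp_rw [hlog]
  rw [integral_const_mul, integral_add (integrable_const _) (by fun_prop),
    integral_sub hT_int hS_int, integral_quadForm_gaussMeasure μ ν hS,
    integral_quadForm_gaussMeasure μ μ hS, htrace, integral_const,
    probReal_univ, one_smul, sub_self, mulVec_zero, zero_dotProduct]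
  ring

end GaussianDensity

section ConjugateUpdate

variable {R m n : Type*} [CommRing R] [Fintype m] [DecidableEq m] [Fintype n] [DecidableEq n]
  {G : Matrix m n R} {Spr : Matrix n n R} {Se : Matrix m m R}

/-- The posterior covariance `Σ_pos` of the linear model with design `G`, prior covariance `Spr`
and noise covariance `Se`. -/
noncomputable def posteriorCov (G : Matrix m n R) (Spr : Matrix n n R) (Se : Matrix m m R) :
    Matrix n n R :=
  (Gᵀ * Se⁻¹ * G + Spr⁻¹)⁻¹

/-- The posterior mean `μ_pos(y)` of the linear model with prior mean `μ`. -/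
noncomputable def posteriorMean (G : Matrix m n R) (Spr : Matrix n n R) (Se : Matrix m m R)
    (μ : n → R) (y : m → R) : n → R :=
  posteriorCov G Spr Se *ᵥ (Spr⁻¹ *ᵥ μ + Gᵀ *ᵥ (Se⁻¹ *ᵥ y))

/-- The Kalman gain, the matrix through which the innovation `y - G μ` moves the prior mean, in
its precision form `Σ_pos Gᵀ Se⁻¹`. -/
noncomputable def kalmanGain (G : Matrix m n R) (Spr : Matrix n n R) (Se : Matrix m m R) :
    Matrix n m R :=
  posteriorCov G Spr Se * Gᵀ * Se⁻¹

lemma posteriorMean_sub (hH : IsUnit (Gᵀ * Se⁻¹ * G + Spr⁻¹).det) (μ : n → R) (y : m → R) :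
    posteriorMean G Spr Se μ y - μ = kalmanGain G Spr Se *ᵥ (y - G *ᵥ μ) := by
  have hμ : posteriorCov G Spr Se *ᵥ ((Gᵀ * Se⁻¹ * G + Spr⁻¹) *ᵥ μ) = μ := by
    rw [mulVec_mulVec, posteriorCov, nonsing_inv_mul _ hH, one_mulVec]
  nth_rewrite 2 [← hμ]
  rw [posteriorMean, kalmanGain, ← mulVec_sub, add_mulVec, mulVec_sub]
  simp only [← mulVec_mulVec, mulVec_add, mulVec_sub]
  abel

lemma kalmanGain_mul_marginalCov (hpr : IsUnit Spr.det) (hε : IsUnit Se.det)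
    (hH : IsUnit (Gᵀ * Se⁻¹ * G + Spr⁻¹).det) :
    kalmanGain G Spr Se * (G * Spr * Gᵀ + Se) = Spr * Gᵀ := by
  calc kalmanGain G Spr Se * (G * Spr * Gᵀ + Se)
    _ = posteriorCov G Spr Se * ((Gᵀ * Se⁻¹ * G + Spr⁻¹) * (Spr * Gᵀ)) := by
      simp only [kalmanGain, Matrix.mul_add, Matrix.add_mul, Matrix.mul_assoc,
        nonsing_inv_mul_cancel_left _ _ hpr, nonsing_inv_mul _ hε, Matrix.mul_one]
    _ = Spr * Gᵀ := nonsing_inv_mul_cancel_left _ _ hH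

lemma kalmanGain_mul_marginalCov_mul_transpose (hpr : IsUnit Spr.det) (hε : IsUnit Se.det)
    (hH : IsUnit (Gᵀ * Se⁻¹ * G + Spr⁻¹).det) (hprT : Spr.IsSymm) (hεT : Se.IsSymm) :
    kalmanGain G Spr Se * (G * Spr * Gᵀ + Se) * (kalmanGain G Spr Se)ᵀ =
      Spr - posteriorCov G Spr Se := by
  have hgainT : (kalmanGain G Spr Se)ᵀ = Se⁻¹ * G * posteriorCov G Spr Se := by
    simp [kalmanGain, posteriorCov, transpose_nonsing_inv, hprT.eq, hεT.eq, Matrix.mul_assoc]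
  calc kalmanGain G Spr Se * (G * Spr * Gᵀ + Se) * (kalmanGain G Spr Se)ᵀ
    _ = Spr * (((Gᵀ * Se⁻¹ * G + Spr⁻¹) - Spr⁻¹) * posteriorCov G Spr Se) := by
      rw [kalmanGain_mul_marginalCov hpr hε hH, hgainT, add_sub_cancel_right]
      simp only [Matrix.mul_assoc]
    _ = Spr - posteriorCov G Spr Se := by
      rw [Matrix.sub_mul, posteriorCov, mul_nonsing_inv _ hH, Matrix.mul_sub, Matrix.mul_one,
        mul_nonsing_inv_cancel_left _ _ hpr]

lemma posteriorCov_mul_add_one (hpr : IsUnit Spr.det)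
    (hH : IsUnit (Gᵀ * Se⁻¹ * G + Spr⁻¹).det) :
    posteriorCov G Spr Se * (Gᵀ * Se⁻¹ * G * Spr + 1) = Spr := by
  rw [← nonsing_inv_mul _ hpr, ← Matrix.add_mul, posteriorCov,
    nonsing_inv_mul_cancel_left _ _ hH]

end ConjugateUpdate

section ExpectedInformationGain

variable {d q : ℕ} {Spr : Matrix (Fin d) (Fin d) ℝ} {Se : Matrix (Fin q) (Fin q) ℝ}

lemma posDef_transpose_mul_mul_add {m n : Type*} [Fintype m] [Finite n] {A : Matrix m m ℝ}
    {B : Matrix n n ℝ} (hA : A.PosSemidef) (hB : B.PosDef) (G : Matrix m n ℝ) :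
    (Gᵀ * A * G + B).PosDef :=
  PosDef.posSemidef_add (hA.conjTranspose_mul_mul_same G) hB

lemma posDef_mul_mul_transpose_add {m n : Type*} [Finite m] [Fintype n] {A : Matrix n n ℝ}
    {B : Matrix m m ℝ} (hA : A.PosSemidef) (hB : B.PosDef) (G : Matrix m n ℝ) :
    (G * A * Gᵀ + B).PosDef :=
  PosDef.posSemidef_add (hA.mul_mul_conjTranspose_same G) hB

lemma integrable_posteriorMean_sub_quadForm (G : Matrix (Fin q) (Fin d) ℝ) (hpr : Spr.PosDef)
    (hε : Se.PosDef) (μ : Fin d → ℝ) (A : Matrix (Fin d) (Fin d) ℝ) :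
    Integrable
      (fun y => (posteriorMean G Spr Se μ y - μ) ⬝ᵥ A *ᵥ (posteriorMean G Spr Se μ y - μ))
      (gaussMeasure (G *ᵥ μ) (G * Spr * Gᵀ + Se)) := by
  have hH := posDef_transpose_mul_mul_add hε.inv.posSemidef hpr.inv G
  simp_rw [posteriorMean_sub hH.det_pos.ne'.isUnit, mulVec_dotProduct_mulVec_mulVec]
  exact integrable_quadForm_gaussMeasure _ _ (posDef_mul_mul_transpose_add hpr.posSemidef hε G) _

lemma integral_posteriorMean_sub_quadForm (G : Matrix (Fin q) (Fin d) ℝ) (hpr : Spr.PosDef)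
    (hε : Se.PosDef) (μ : Fin d → ℝ) (A : Matrix (Fin d) (Fin d) ℝ) :
    ∫ y, (posteriorMean G Spr Se μ y - μ) ⬝ᵥ A *ᵥ (posteriorMean G Spr Se μ y - μ)
        ∂gaussMeasure (G *ᵥ μ) (G * Spr * Gᵀ + Se) =
      (A * (Spr - posteriorCov G Spr Se)).trace := by
  have hH := posDef_transpose_mul_mul_add hε.inv.posSemidef hpr.inv G
  have hM := posDef_mul_mul_transpose_add hpr.posSemidef hε G
  simp_rw [posteriorMean_sub hH.det_pos.ne'.isUnit, mulVec_dotProduct_mulVec_mulVec]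
  rw [integral_quadForm_gaussMeasure _ _ hM, sub_self, zero_dotProduct, zero_add,
    ← kalmanGain_mul_marginalCov_mul_transpose hpr.det_pos.ne'.isUnit hε.det_pos.ne'.isUnit
      hH.det_pos.ne'.isUnit (isHermitian_iff_isSymm.1 hpr.isHermitian)
      (isHermitian_iff_isSymm.1 hε.isHermitian),
    Matrix.mul_assoc, Matrix.mul_assoc, Matrix.trace_mul_comm]
  simp only [Matrix.mul_assoc]

lemma log_det_mul_add_one (G : Matrix (Fin q) (Fin d) ℝ) (hpr : Spr.PosDef) (hε : Se.PosDef) :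
    log (Gᵀ * Se⁻¹ * G * Spr + 1).det = log Spr.det - log (posteriorCov G Spr Se).det := by
  have hH := posDef_transpose_mul_mul_add hε.inv.posSemidef hpr.inv G
  have hdet := congrArg det
    (posteriorCov_mul_add_one hpr.det_pos.ne'.isUnit hH.det_pos.ne'.isUnit)
  rw [det_mul] at hdet
  have hpos : (posteriorCov G Spr Se).det * (Gᵀ * Se⁻¹ * G * Spr + 1).det ≠ 0 :=
    hdet ▸ hpr.det_pos.ne'
  rw [← hdet, log_mul (left_ne_zero_of_mul hpos) (right_ne_zero_of_mul hpos),
    add_sub_cancel_left]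

end ExpectedInformationGain

/-- In the linear conjugate-Gaussian setting, the expected information gain, the
expectation over the marginal of the data y of the KL divergence from the prior to
the posterior, equals ½ log det(Gᵀ Se⁻¹ G Spr + I). -/
theorem expected_information_gain {d q : ℕ}
    (G : Matrix (Fin q) (Fin d) ℝ)
    (Spr : Matrix (Fin d) (Fin d) ℝ) (Se : Matrix (Fin q) (Fin q) ℝ)
    (hpr : Spr.PosDef) (hε : Se.PosDef)
    (μpr : Fin d → ℝ)
    (Spos : Matrix (Fin d) (Fin d) ℝ)
    (hSpos : Spos = (Gᵀ * Se⁻¹ * G + Spr⁻¹)⁻¹)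
    (μpos : (Fin q → ℝ) → (Fin d → ℝ))
    (hμpos : ∀ y, μpos y = Spos *ᵥ (Spr⁻¹ *ᵥ μpr + Gᵀ *ᵥ (Se⁻¹ *ᵥ y))) :
    (∫ y : Fin q → ℝ,
        (∫ m : Fin d → ℝ,
          Real.log (gaussPdf (μpos y) Spos m / gaussPdf μpr Spr m) *
            gaussPdf (μpos y) Spos m) *
        gaussPdf (G *ᵥ μpr) (G * Spr * Gᵀ + Se) y) =
      (1/2) * Real.log (Gᵀ * Se⁻¹ * G * Spr + 1).det := by
  obtain rfl : Spos = posteriorCov G Spr Se := hSpos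
  obtain rfl : μpos = posteriorMean G Spr Se μpr := funext hμpos
  have hpos : (posteriorCov G Spr Se).PosDef :=
    (posDef_transpose_mul_mul_add hε.inv.posSemidef hpr.inv G).inv
  have := isProbabilityMeasure_gaussMeasure (G *ᵥ μpr)
    (posDef_mul_mul_transpose_add hpr.posSemidef hε G)
  have htrace : (Spr⁻¹ * (Spr - posteriorCov G Spr Se)).trace =
      d - (Spr⁻¹ * posteriorCov G Spr Se).trace := by
    rw [Matrix.mul_sub, nonsing_inv_mul _ hpr.det_pos.ne'.isUnit, trace_sub, trace_one,
      Fintype.card_fin]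
  simp_rw [← integral_gaussMeasure, integral_log_gaussPdf_div_gaussPdf _ μpr hpos hpr]
  rw [integral_const_mul, integral_add (integrable_const _)
      (integrable_posteriorMean_sub_quadForm G hpr hε μpr Spr⁻¹),
    integral_posteriorMean_sub_quadForm G hpr hε, htrace, log_det_mul_add_one G hpr hε,
    integral_const, probReal_univ, one_smul]
  ring
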